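/- Let P be a collection of nonempty bounded open intervals of ℝ with ∪P ⊆ (a,b) for real numbers a < b. Then the following are equivalent: (1) there is no outer cover of (a,b) with respect to P consisting of exactly two intervals; (2) ∪P = (a,b) and there is an inner cover of (a,b) with respect to P consisting of a single interval; (3) every interval (c,d) with a < c < d < b is dominated by P. -/

import Mathlib

open Set

/-- A linked list of (nonempty bounded open) intervals `(a i, b i)` of `ℝ`, indexed by a
nonempty set `S` of consecutive integers, consecutive intervals overlapping and the chain
condition `a i < b (i-1) < a (i+1) < b i` holding whenever the indices involved lie in `S`. -/
structure LinkedList where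
  S : Set ℤ
  nonempty : S.Nonempty
  consecutive : ∀ i ∈ S, ∀ k ∈ S, ∀ j : ℤ, i ≤ j → j ≤ k → j ∈ S
  a : ℤ → ℝ
  b : ℤ → ℝ
  lt : ∀ i ∈ S, a i < b i
  mono_a : ∀ i : ℤ, i ∈ S → i + 1 ∈ S → a i < a (i + 1)
  mono_b : ∀ i : ℤ, i ∈ S → i + 1 ∈ S → b i < b (i + 1)
  overlap : ∀ i : ℤ, i ∈ S → i + 1 ∈ S → a (i + 1) < b i
  gap : ∀ i : ℤ, i ∈ S → i + 2 ∈ S → b i < a (i + 2)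

namespace LinkedList

/-- The `i`-th interval of the list. -/
def interval (L : LinkedList) (i : ℤ) : Set ℝ := Ioo (L.a i) (L.b i)

/-- The union of the intervals of the list. -/
def union (L : LinkedList) : Set ℝ := ⋃ i ∈ L.S, L.interval i

/-- The list has a least element. -/
def HasLeast (L : LinkedList) : Prop := ∃ i ∈ L.S, ∀ j ∈ L.S, i ≤ j

/-- The list has a greatest element. -/
def HasGreatest (L : LinkedList) : Prop := ∃ i ∈ L.S, ∀ j ∈ L.S, j ≤ i

end LinkedList

/-- `P` is a collection of nonempty bounded open intervals of `ℝ`. -/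
def IsIntervalCollection (P : Set (Set ℝ)) : Prop :=
  ∀ J ∈ P, ∃ c d : ℝ, c < d ∧ J = Ioo c d

/-- An interval is dominated by `P` if it is contained in some member of `P`. -/
def Dominated (P : Set (Set ℝ)) (J : Set ℝ) : Prop := ∃ K ∈ P, J ⊆ K

/-- An interval is approximately dominated by `P` if it is the union of an increasing
sequence of intervals, each dominated by `P`. -/
def ApproxDominated (P : Set (Set ℝ)) (J : Set ℝ) : Prop :=
  ∃ c d : ℕ → ℝ, (∀ n, c n < d n) ∧
    (∀ n, Ioo (c n) (d n) ⊆ Ioo (c (n + 1)) (d (n + 1))) ∧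
    (∀ n, Dominated P (Ioo (c n) (d n))) ∧ J = ⋃ n, Ioo (c n) (d n)

/-- An inner cover of `(x, y)` with respect to `P`: a linked list with union `(x, y)`, each of
whose intervals is approximately dominated by `P`. -/
def IsInnerCover (P : Set (Set ℝ)) (x y : ℝ) (L : LinkedList) : Prop :=
  L.union = Ioo x y ∧ ∀ i ∈ L.S, ApproxDominated P (L.interval i)

/-- An outer cover of `(x, y)` with respect to `P`: a linked list with union `(x, y)` such that
every member of `P` is contained in some interval of the list. -/
def IsOuterCover (P : Set (Set ℝ)) (x y : ℝ) (L : LinkedList) : Prop :=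
  L.union = Ioo x y ∧ ∀ J ∈ P, ∃ i ∈ L.S, J ⊆ L.interval i

/-- `L_P(x)`: the infimum of left endpoints of members of `P` containing `x`. -/
noncomputable def leftEnd (P : Set (Set ℝ)) (x : ℝ) : ℝ :=
  sInf {c | ∃ d, Ioo c d ∈ P ∧ x ∈ Ioo c d}

/-- `R_P(x)`: the supremum of right endpoints of members of `P` containing `x`. -/
noncomputable def rightEnd (P : Set (Set ℝ)) (x : ℝ) : ℝ :=
  sSup {d | ∃ c, Ioo c d ∈ P ∧ x ∈ Ioo c d}

/-! If `(c, d)` is not dominated, then no member of `P` contains `[c, d]`, so each member lies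
left of `d` or right of `c`, and `(a, d), (c, b)` is an outer cover. Conversely, suppose an
outer cover of `(a, b)` contains two consecutive intervals `i` and `i + 1`. An interval `(c, d)`
whose left end lies strictly between the left ends of these two, and whose right end lies strictly
between their right ends, is contained in no interval of the list, hence in no member of `P`.
Finally, a one-element inner cover of `(a, b)` amounts to `(a, b)` being approximately dominated,
which an exhaustion of `(a, b)` by intervals with endpoints converging to `a` and `b` reduces to the
domination of the intervals `(c, d)`. -/

section Order

variable {α : Type*} [LinearOrder α]

theorem Ioo_union_Ioo_of_lt_of_lt_of_lt {a b c d : α} (hac : a < c) (hcd : c < d) (hdb : d < b) :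
    Ioo a d ∪ Ioo c b = Ioo a b := by
  rw [Ioo_union_Ioo' hcd (hac.trans (hcd.trans hdb)), min_eq_left hac.le, max_eq_right hdb.le]

theorem subset_Iio_or_subset_Ioi_of_not_Icc_subset {s : Set α} (hs : s.OrdConnected) {c d : α}
    (h : ¬Icc c d ⊆ s) : s ⊆ Iio d ∨ s ⊆ Ioi c := by
  by_contra! hne
  obtain ⟨⟨y, hy, hdy⟩, x, hx, hxc⟩ := hne.imp not_subset.1 not_subset.1
  exact h ((Icc_subset_Icc (not_lt.1 hxc) (not_lt.1 hdy)).trans (hs.out hx hy))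

theorem exists_seq_iUnion_Ioo_eq_Ioo [TopologicalSpace α] [OrderTopology α] [DenselyOrdered α]
    [FirstCountableTopology α] {a b : α} (hab : a < b) :
    ∃ u v : ℕ → α, StrictAnti u ∧ StrictMono v ∧ (∀ n, a < u n ∧ u n < v n ∧ v n < b) ∧
      ⋃ n, Ioo (u n) (v n) = Ioo a b := by
  obtain ⟨m, ham, hmb⟩ := exists_between hab
  obtain ⟨u, hu_anti, hu_mem, hu_lim⟩ := exists_seq_strictAnti_tendsto' ham
  obtain ⟨v, hv_mono, hv_mem, hv_lim⟩ := exists_seq_strictMono_tendsto' hmb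
  refine ⟨u, v, hu_anti, hv_mono,
    fun n => ⟨(hu_mem n).1, (hu_mem n).2.trans (hv_mem n).1, (hv_mem n).2⟩, ?_⟩
  refine (iUnion_subset fun n => Ioo_subset_Ioo (hu_mem n).1.le (hv_mem n).2.le).antisymm ?_
  rintro x ⟨hax, hxb⟩
  obtain ⟨n, hn⟩ := ((hu_lim.eventually_lt_const hax).and (hv_lim.eventually_const_lt hxb)).exists
  exact mem_iUnion.2 ⟨n, hn⟩

end Order

section Domination

variable {P : Set (Set ℝ)} {I J : Set ℝ} {a b : ℝ}

theorem Dominated.mono (hJ : Dominated P J) (hIJ : I ⊆ J) : Dominated P I :=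
  hJ.imp fun _ hK => ⟨hK.1, hIJ.trans hK.2⟩

theorem Dominated.subset_sUnion (hJ : Dominated P J) : J ⊆ ⋃₀ P :=
  let ⟨_, hK, hJK⟩ := hJ
  subset_sUnion_of_subset P _ hJK hK

theorem ApproxDominated.subset_sUnion (hJ : ApproxDominated P J) : J ⊆ ⋃₀ P := by
  obtain ⟨u, v, -, -, hdom, rfl⟩ := hJ
  exact iUnion_subset fun n => (hdom n).subset_sUnion

theorem ApproxDominated.dominated_Icc (hJ : ApproxDominated P J) {c d : ℝ} (hc : c ∈ J)
    (hd : d ∈ J) : Dominated P (Icc c d) := by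
  obtain ⟨u, v, -, hsucc, hdom, rfl⟩ := hJ
  have hmono : Monotone fun n => Ioo (u n) (v n) := monotone_nat_of_le_succ hsucc
  obtain ⟨m, hm⟩ := mem_iUnion.1 hc
  obtain ⟨n, hn⟩ := mem_iUnion.1 hd
  have hc' := hmono (le_max_left m n) hm
  have hd' := hmono (le_max_right m n) hn
  exact (hdom (max m n)).mono (ordConnected_Ioo.out hc' hd')

theorem approxDominated_Ioo_iff (hab : a < b) :
    ApproxDominated P (Ioo a b) ↔
      ∀ c d : ℝ, a < c → c < d → d < b → Dominated P (Ioo c d) := by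
  constructor
  · intro h c d hac hcd hdb
    exact (h.dominated_Icc ⟨hac, hcd.trans hdb⟩ ⟨hac.trans hcd, hdb⟩).mono Ioo_subset_Icc_self
  · intro h
    obtain ⟨u, v, hu, hv, huv, hUnion⟩ := exists_seq_iUnion_Ioo_eq_Ioo hab
    exact ⟨u, v, fun n => (huv n).2.1,
      fun n => Ioo_subset_Ioo (hu n.lt_succ_self).le (hv n.lt_succ_self).le,
      fun n => h _ _ (huv n).1 (huv n).2.1 (huv n).2.2, hUnion.symm⟩

end Domination

namespace LinkedList

section Basic

variable (L : LinkedList)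

theorem ordConnected : L.S.OrdConnected :=
  ⟨fun i hi k hk j hj => L.consecutive i hi k hk j hj.1 hj.2⟩

theorem strictMonoOn_a : StrictMonoOn L.a L.S :=
  strictMonoOn_of_lt_add_one L.ordConnected fun i _ => L.mono_a i

theorem strictMonoOn_b : StrictMonoOn L.b L.S :=
  strictMonoOn_of_lt_add_one L.ordConnected fun i _ => L.mono_b i

theorem interval_subset_union {i : ℤ} (hi : i ∈ L.S) : L.interval i ⊆ L.union :=
  subset_biUnion_of_mem (u := L.interval) hi

theorem exists_mem_add_one_mem (hL : L.S.Nontrivial) : ∃ i ∈ L.S, i + 1 ∈ L.S := by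
  obtain ⟨i, hi, j, hj, hij⟩ := hL.exists_lt
  exact ⟨i, hi, L.ordConnected.out hi hj ⟨by lia, by lia⟩⟩

end Basic

/-- The linked list whose only interval is `(a, b)`, with index `0`; it is the candidate for a
one-element inner cover of `(a, b)`. -/
def single (a b : ℝ) (hab : a < b) : LinkedList where
  S := {0}
  nonempty := singleton_nonempty 0
  consecutive := by simp only [mem_singleton_iff]; lia
  a _ := a
  b _ := b
  lt _ _ := hab
  mono_a := by simp only [mem_singleton_iff]; lia
  mono_b := by simp only [mem_singleton_iff]; lia
  overlap := by simp only [mem_singleton_iff]; lia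
  gap := by simp only [mem_singleton_iff]; lia

theorem union_single {a b : ℝ} (hab : a < b) : (single a b hab).union = Ioo a b :=
  biUnion_singleton _ _

/-- The linked list consisting of `(a, d)` and `(c, b)`, with indices `0` and `1`; it is the
two-element outer cover of `(a, b)` that exists when `(c, d)` is not dominated. -/
def pair (a b c d : ℝ) (hac : a < c) (hcd : c < d) (hdb : d < b) : LinkedList where
  S := {0, 1}
  nonempty := insert_nonempty 0 {1}
  consecutive := by simp only [mem_insert_iff, mem_singleton_iff]; lia
  a i := if i = 0 then a else c
  b i := if i = 0 then d else b
  lt := by grind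
  mono_a := by grind
  mono_b := by grind
  overlap := by grind
  gap := by grind

theorem union_pair {a b c d : ℝ} (hac : a < c) (hcd : c < d) (hdb : d < b) :
    (pair a b c d hac hcd hdb).union = Ioo a b := by
  rw [← Ioo_union_Ioo_of_lt_of_lt_of_lt hac hcd hdb]
  exact biUnion_pair 0 1 _

end LinkedList

section Covers

variable {P : Set (Set ℝ)} {a b : ℝ}

theorem exists_isInnerCover_ncard_eq_one_iff (hab : a < b) :
    (∃ L : LinkedList, IsInnerCover P a b L ∧ L.S.ncard = 1) ↔ ApproxDominated P (Ioo a b) := by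
  constructor
  · rintro ⟨L, ⟨hUnion, hdom⟩, hcard⟩
    obtain ⟨i, hi⟩ := ncard_eq_one.1 hcard
    have hinterval : L.interval i = Ioo a b := by
      rw [← hUnion, LinkedList.union, hi, biUnion_singleton]
    exact hinterval ▸ hdom i (hi ▸ mem_singleton i)
  · intro h
    exact ⟨.single a b hab, ⟨LinkedList.union_single hab, fun _ _ => h⟩, ncard_singleton 0⟩

theorem exists_isOuterCover_ncard_eq_two (hP : ∀ J ∈ P, J.OrdConnected) (hU : ⋃₀ P ⊆ Ioo a b)
    {c d : ℝ} (hac : a < c) (hcd : c < d) (hdb : d < b) (hdom : ¬Dominated P (Ioo c d)) :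
    ∃ L : LinkedList, IsOuterCover P a b L ∧ L.S.ncard = 2 := by
  refine ⟨.pair a b c d hac hcd hdb, ⟨LinkedList.union_pair hac hcd hdb, fun J hJ => ?_⟩,
    ncard_pair zero_ne_one⟩
  have hJab : J ⊆ Ioo a b := (subset_sUnion_of_mem hJ).trans hU
  have hJcd : ¬Icc c d ⊆ J := fun h => hdom ⟨J, hJ, Ioo_subset_Icc_self.trans h⟩
  rcases subset_Iio_or_subset_Ioi_of_not_Icc_subset (hP J hJ) hJcd with hJd | hJc
  · exact ⟨0, mem_insert 0 {1}, fun x hx => ⟨(hJab hx).1, hJd hx⟩⟩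
  · exact ⟨1, mem_insert_of_mem 0 rfl, fun x hx => ⟨hJc hx, (hJab hx).2⟩⟩

theorem IsOuterCover.exists_not_dominated {L : LinkedList} (hL : IsOuterCover P a b L)
    (hS : L.S.Nontrivial) : ∃ c d : ℝ, a < c ∧ c < d ∧ d < b ∧ ¬Dominated P (Ioo c d) := by
  obtain ⟨i, hi, hi'⟩ := L.exists_mem_add_one_mem hS
  have hends : ∀ j ∈ L.S, a ≤ L.a j ∧ L.b j ≤ b := fun j hj =>
    (Ioo_subset_Ioo_iff (L.lt j hj)).1 ((L.interval_subset_union hj).trans hL.1.subset)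
  obtain ⟨c, hic, hci⟩ := exists_between (L.mono_a i hi hi')
  obtain ⟨d, hid, hdi⟩ := exists_between (L.mono_b i hi hi')
  have hcd : c < d := hci.trans ((L.overlap i hi hi').trans hid)
  refine ⟨c, d, (hends i hi).1.trans_lt hic, hcd, hdi.trans_le (hends _ hi').2, ?_⟩
  rintro ⟨K, hK, hcdK⟩
  obtain ⟨j, hj, hKj⟩ := hL.2 K hK
  obtain ⟨hjc, hdj⟩ := (Ioo_subset_Ioo_iff hcd).1 (hcdK.trans hKj)
  have hji : j < i + 1 := (L.strictMonoOn_a.lt_iff_lt hj hi').1 (hjc.trans_lt hci)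
  have hij : i < j := (L.strictMonoOn_b.lt_iff_lt hi hj).1 (hid.trans_le hdj)
  lia

theorem not_exists_isOuterCover_ncard_eq_two_iff (hP : ∀ J ∈ P, J.OrdConnected)
    (hU : ⋃₀ P ⊆ Ioo a b) :
    (¬∃ L : LinkedList, IsOuterCover P a b L ∧ L.S.ncard = 2) ↔
      ∀ c d : ℝ, a < c → c < d → d < b → Dominated P (Ioo c d) := by
  constructor
  · intro h c d hac hcd hdb
    by_contra hdom
    exact h (exists_isOuterCover_ncard_eq_two hP hU hac hcd hdb hdom)
  · rintro h ⟨L, hL, hcard⟩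
    have hS : L.S.Nontrivial := (one_lt_ncard_iff_nontrivial_and_finite.1 (by lia)).1
    obtain ⟨c, d, hac, hcd, hdb, hdom⟩ := hL.exists_not_dominated hS
    exact hdom (h c d hac hcd hdb)

end Covers

theorem IsIntervalCollection.ordConnected {P : Set (Set ℝ)} (hP : IsIntervalCollection P) :
    ∀ J ∈ P, J.OrdConnected := fun J hJ =>
  let ⟨_, _, _, hJ'⟩ := hP J hJ
  hJ' ▸ ordConnected_Ioo

theorem stmt16_general (P : Set (Set ℝ)) (a b : ℝ) (hab : a < b)
    (hP : ∀ J ∈ P, J.OrdConnected) (hU : ⋃₀ P ⊆ Ioo a b) :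
    ((¬∃ L : LinkedList, IsOuterCover P a b L ∧ L.S.ncard = 2) ↔
      (⋃₀ P = Ioo a b ∧ ∃ L : LinkedList, IsInnerCover P a b L ∧ L.S.ncard = 1)) ∧
    ((⋃₀ P = Ioo a b ∧ ∃ L : LinkedList, IsInnerCover P a b L ∧ L.S.ncard = 1) ↔
      ∀ c d : ℝ, a < c → c < d → d < b → Dominated P (Ioo c d)) := by
  have h13 := not_exists_isOuterCover_ncard_eq_two_iff hP hU
  have h23 : (⋃₀ P = Ioo a b ∧ ∃ L : LinkedList, IsInnerCover P a b L ∧ L.S.ncard = 1) ↔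
      ∀ c d : ℝ, a < c → c < d → d < b → Dominated P (Ioo c d) := by
    rw [exists_isInnerCover_ncard_eq_one_iff hab, ← approxDominated_Ioo_iff hab]
    exact and_iff_right_of_imp fun h => hU.antisymm h.subset_sUnion
  exact ⟨h13.trans h23.symm, h23⟩

/-- For `⋃₀ P ⊆ (a, b)`, the following are equivalent: (1) there is no
two-element outer cover of `(a, b)`; (2) `⋃₀ P = (a, b)` and there is a one-element inner
cover of `(a, b)`; (3) every interval `(c, d)` with `a < c < d < b` is dominated by `P`. -/
theorem stmt16 (P : Set (Set ℝ)) (a b : ℝ) (hab : a < b)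
    (hP : IsIntervalCollection P) (hU : ⋃₀ P ⊆ Ioo a b) :
    ((¬∃ L : LinkedList, IsOuterCover P a b L ∧ L.S.ncard = 2) ↔
      (⋃₀ P = Ioo a b ∧ ∃ L : LinkedList, IsInnerCover P a b L ∧ L.S.ncard = 1)) ∧
    ((⋃₀ P = Ioo a b ∧ ∃ L : LinkedList, IsInnerCover P a b L ∧ L.S.ncard = 1) ↔
      ∀ c d : ℝ, a < c → c < d → d < b → Dominated P (Ioo c d)) :=
  stmt16_general P a b hab hP.ordConnected hU
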